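/- arXiv:1107.4545 — 2 statements merged into one kernel-verified Lean document; each statement's English description precedes it below -/
import Mathlib

section
/- Criterion of extremeness (Lemma 4.3): Let V be a finite-dimensional real vector space, let C¹ and C² be closed convex cones in V with C² salient, let α : V → ℝ be a linear functional, and let g ∈ V be a nonzero vector with ray R = {t·g : t ≥ 0}. Assume: (i) C¹ ∩ ker α = R and C¹ ⊆ {α ≥ 0}; (ii) C² ⊆ {α ≥ 0}; (iii) g ∉ C² and −g ∉ C². Then R is an extremal ray of the Minkowski sum C¹ + C², i.e. whenever x, y ∈ C¹ + C² satisfy x + y ∈ R, both x ∈ R and y ∈ R. -/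
open Pointwise

/-!
The functional `α` exposes a face of `C¹ + C²`, namely `R + K` with `K = C² ∩ ker α`. Since
`±g ∉ C²`, the line spanned by `R` meets `K` only in `0`. So if two elements of `R + K` add up to
an element of `R`, their `K`-components have sum `0`, and both vanish because `K` is salient.
-/

section IsExtremalSubset

/-- `F` is an extremal subset of `D` if summands from `D` of elements of `F` lie in `F`; an extremal
ray of a cone is a ray with this property. The inclusion `F ⊆ D` is not part of the definition, so
that `F` may be a whole hyperplane. -/
def IsExtremalSubset {G : Type*} [Add G] (D F : Set G) : Prop :=
  ∀ x ∈ D, ∀ y ∈ D, x + y ∈ F → x ∈ F ∧ y ∈ F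

variable {G : Type*} [Add G] {D D' E F : Set G}

theorem IsExtremalSubset.mono (h : IsExtremalSubset D F) (hD : D' ⊆ D) : IsExtremalSubset D' F :=
  fun x hx y hy => h x (hD hx) y (hD hy)

theorem IsExtremalSubset.trans (hE : IsExtremalSubset D E) (hF : IsExtremalSubset (D ∩ E) F)
    (hFE : F ⊆ E) : IsExtremalSubset D F := fun x hx y hy hxy =>
  have ⟨hxE, hyE⟩ := hE x hx y hy (hFE hxy)
  hF x ⟨hx, hxE⟩ y ⟨hy, hyE⟩ hxy

end IsExtremalSubset

section Exposed

variable {G M : Type*} [AddCommMonoid G] [AddCommMonoid M] [PartialOrder M] [IsOrderedAddMonoid M]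
  {α : G →+ M} {D S T : Set G}

theorem isExtremalSubset_setOf_map_eq_zero (hD : D ⊆ {x | 0 ≤ α x}) :
    IsExtremalSubset D {x | α x = 0} := fun x hx y hy hxy =>
  (add_eq_zero_iff_of_nonneg (hD hx) (hD hy)).1 ((map_add α x y).symm.trans hxy)

theorem add_subset_setOf_map_nonneg (hS : S ⊆ {x | 0 ≤ α x}) (hT : T ⊆ {x | 0 ≤ α x}) :
    S + T ⊆ {x | 0 ≤ α x} := by
  rintro _ ⟨a, ha, b, hb, rfl⟩
  exact (add_nonneg (hS ha) (hT hb)).trans_eq (map_add α a b).symm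

theorem add_inter_setOf_map_eq_zero (hS : S ⊆ {x | 0 ≤ α x}) (hT : T ⊆ {x | 0 ≤ α x}) :
    (S + T) ∩ {x | α x = 0} = S ∩ {x | α x = 0} + T ∩ {x | α x = 0} := by
  apply Set.Subset.antisymm
  · rintro _ ⟨⟨a, ha, b, hb, rfl⟩, hab : α (a + b) = 0⟩
    rw [map_add, add_eq_zero_iff_of_nonneg (hS ha) (hT hb)] at hab
    exact Set.add_mem_add ⟨ha, hab.1⟩ ⟨hb, hab.2⟩
  · rintro _ ⟨a, ⟨ha, ha₀ : α a = 0⟩, b, ⟨hb, hb₀ : α b = 0⟩, rfl⟩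
    have hab : α (a + b) = 0 := by rw [map_add, ha₀, hb₀, add_zero]
    exact ⟨Set.add_mem_add ha hb, hab⟩

end Exposed

section IsSalient

/-- The salience condition `K ∩ (-K) ⊆ {0}`, for arbitrary subsets of an additive group;
`ConvexCone.Salient` is the same condition on a bundled convex cone. -/
def IsSalient {G : Type*} [AddGroup G] (K : Set G) : Prop :=
  ∀ x ∈ K, -x ∈ K → x = 0

theorem IsSalient.eq_zero_of_add_eq_zero {G : Type*} [AddGroup G] {K : Set G} (hK : IsSalient K)
    {x y : G} (hx : x ∈ K) (hy : y ∈ K) (hxy : x + y = 0) : x = 0 ∧ y = 0 := by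
  have hx₀ : x = 0 := hK x hx (neg_eq_of_add_eq_zero_right hxy ▸ hy)
  exact ⟨hx₀, by rwa [hx₀, zero_add] at hxy⟩

theorem IsSalient.isExtremalSubset_add {G : Type*} [AddCommGroup G] {F K : Set G}
    {W : AddSubgroup G} (hK : IsSalient K) (hKadd : ∀ x ∈ K, ∀ y ∈ K, x + y ∈ K) (hFW : F ⊆ W)
    (hKW : K ∩ W ⊆ {0}) : IsExtremalSubset (F + K) F := by
  rintro _ ⟨a, ha, b, hb, rfl⟩ _ ⟨c, hc, d, hd, rfl⟩ hsum
  have hbdW : b + d ∈ W := by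
    rw [add_add_add_comm] at hsum
    exact (W.add_mem_cancel_left (W.add_mem (hFW ha) (hFW hc))).1 (hFW hsum)
  have hbd : b + d = 0 := hKW ⟨hKadd b hb d hd, hbdW⟩
  obtain ⟨rfl, rfl⟩ := hK.eq_zero_of_add_eq_zero hb hd hbd
  simpa only [add_zero] using And.intro ha hc

end IsSalient

theorem inter_span_singleton_subset_zero_of_notMem {𝕜 V : Type*} [Field 𝕜] [LinearOrder 𝕜]
    [IsStrictOrderedRing 𝕜] [AddCommGroup V] [Module 𝕜 V] {K : Set V} {g : V}
    (hK : ∀ t : 𝕜, 0 ≤ t → ∀ x ∈ K, t • x ∈ K) (hg : g ∉ K) (hg' : -g ∉ K) :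
    K ∩ Submodule.span 𝕜 {g} ⊆ {0} := by
  rintro _ ⟨hz, hzg⟩
  obtain ⟨t, rfl⟩ := Submodule.mem_span_singleton.1 hzg
  have mem_of_smul_mem {c : 𝕜} {x : V} (hc : 0 < c) (hx : c • x ∈ K) : x ∈ K :=
    inv_smul_smul₀ hc.ne' x ▸ hK c⁻¹ (inv_pos.2 hc).le _ hx
  rcases lt_trichotomy t 0 with ht | rfl | ht
  · rw [← neg_smul_neg] at hz
    exact absurd (mem_of_smul_mem (neg_pos.2 ht) hz) hg'
  · exact zero_smul 𝕜 g
  · exact absurd (mem_of_smul_mem ht hz) hg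

theorem extremeness_criterion_general {G M : Type*} [AddCommGroup G] [AddCommMonoid M]
    [PartialOrder M] [IsOrderedAddMonoid M] {C₁ C₂ : Set G} {W : AddSubgroup G} {α : G →+ M}
    (hadd : ∀ x ∈ C₂, ∀ y ∈ C₂, x + y ∈ C₂) (hsalient : IsSalient C₂)
    (hC₁pos : C₁ ⊆ {x | 0 ≤ α x}) (hC₂pos : C₂ ⊆ {x | 0 ≤ α x})
    (hC₁W : C₁ ∩ {x | α x = 0} ⊆ W) (hC₂W : C₂ ∩ W ⊆ {0}) :
    IsExtremalSubset (C₁ + C₂) (C₁ ∩ {x | α x = 0}) := by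
  have hker : (C₁ + C₂) ∩ {x | α x = 0} ⊆ C₁ ∩ {x | α x = 0} + C₂ :=
    (add_inter_setOf_map_eq_zero hC₁pos hC₂pos).trans_subset
      (Set.add_subset_add_left Set.inter_subset_left)
  have hexposed : IsExtremalSubset (C₁ + C₂) {x | α x = 0} :=
    isExtremalSubset_setOf_map_eq_zero (add_subset_setOf_map_nonneg hC₁pos hC₂pos)
  have hface : IsExtremalSubset (C₁ ∩ {x | α x = 0} + C₂) (C₁ ∩ {x | α x = 0}) :=
    hsalient.isExtremalSubset_add hadd hC₁W hC₂W
  exact hexposed.trans (hface.mono hker) Set.inter_subset_right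

/-- Criterion of extremeness (Lemma 4.3): if `C¹`, `C²` are closed convex cones in a
finite-dimensional real vector space, `C²` is salient, `α` is a linear functional,
`g ≠ 0` generates the ray `R`, `C¹ ∩ ker α = R`, both cones lie in `{α ≥ 0}`, and
neither `g` nor `-g` lies in `C²`, then `R` is an extremal ray of `C¹ + C²`. -/
theorem extremeness_criterion
    {V : Type*} [NormedAddCommGroup V] [NormedSpace ℝ V] [FiniteDimensional ℝ V]
    (C1 C2 : Set V)
    (hC1add : ∀ x ∈ C1, ∀ y ∈ C1, x + y ∈ C1)
    (hC1smul : ∀ (t : ℝ), 0 ≤ t → ∀ x ∈ C1, t • x ∈ C1)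
    (hC1closed : IsClosed C1)
    (hC2add : ∀ x ∈ C2, ∀ y ∈ C2, x + y ∈ C2)
    (hC2smul : ∀ (t : ℝ), 0 ≤ t → ∀ x ∈ C2, t • x ∈ C2)
    (hC2closed : IsClosed C2)
    (hC2salient : ∀ x ∈ C2, -x ∈ C2 → x = 0)
    (α : V →ₗ[ℝ] ℝ) (g : V) (hg : g ≠ 0)
    (R : Set V) (hR : R = {x | ∃ t : ℝ, 0 ≤ t ∧ x = t • g})
    (hker : C1 ∩ {x | α x = 0} = R)
    (hC1pos : C1 ⊆ {x | 0 ≤ α x})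
    (hC2pos : C2 ⊆ {x | 0 ≤ α x})
    (hgC2 : g ∉ C2) (hgC2' : -g ∉ C2) :
    ∀ x ∈ C1 + C2, ∀ y ∈ C1 + C2, x + y ∈ R → x ∈ R ∧ y ∈ R := by
  have hRg : R ⊆ (Submodule.span ℝ {g}).toAddSubgroup :=
    hR.trans_subset fun _ ⟨t, _, hx⟩ => Submodule.mem_span_singleton.2 ⟨t, hx.symm⟩
  exact hker ▸ extremeness_criterion_general (α := α.toAddMonoidHom) hC2add hC2salient hC1pos hC2pos
    (hker.trans_subset hRg) (inter_span_singleton_subset_zero_of_notMem hC2smul hgC2 hgC2')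
end

section
/- Let V be a finite-dimensional real vector space and let C ⊆ V be a closed salient convex cone with C ≠ {0}. Let α, β : V → ℝ be linear functionals with no common zero on C \ {0}, i.e. for every x ∈ C \ {0} one has α(x) ≠ 0 or β(x) ≠ 0. Then there exist real numbers b and c, both nonzero, such that b·α(x) + c·β(x) > 0 for every x ∈ C \ {0}. -/
/-!
Rescaling reduces positivity on `C \ {0}` to positivity on the compact set `K` of unit vectors of
`C`. Salience makes `C \ {0}` convex, so it contains the convex hull of `K`, and the functionals
`α i`, taken together as a linear map to `ι → ℝ`, send that hull to a convex set avoiding the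
origin. By Carathéodory's theorem the image, being the convex hull of a compact set in a
finite-dimensional space, is compact, so Hahn–Banach separates it from the origin and gives
coefficients for which the combination is positive on `K`. Such coefficients form an open set
by compactness of `K`, and a nonempty open set contains a vector with no zero entry.
-/

open Set Topology

theorem convex_diff_zero_of_salient {R V : Type*} [Field R] [LinearOrder R] [IsStrictOrderedRing R]
    [AddCommGroup V] [Module R V] {C : ConvexCone R V} (hC : C.Salient) :
    Convex R ((C : Set V) \ {0}) := by
  refine convex_iff_forall_pos.2 fun x hx y hy a b ha hb _ ↦ ?_
  have hax : a • x ∈ C := C.smul_mem ha hx.1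
  have hby : b • y ∈ C := C.smul_mem hb hy.1
  refine ⟨C.add_mem hax hby, fun hsum ↦ hC _ hax (smul_ne_zero ha.ne' hx.2) ?_⟩
  rwa [neg_eq_of_add_eq_zero_right hsum]

theorem convexHull_eq_iUnion_image_stdSimplex_prod (R : Type*) {E : Type*} [Field R] [LinearOrder R]
    [IsStrictOrderedRing R] [AddCommGroup E] [Module R E] [FiniteDimensional R E] (s : Set E) :
    convexHull R s = ⋃ k : Fin (Module.finrank R E + 2),
      (fun p : (Fin k → R) × (Fin k → E) ↦ ∑ i, p.1 i • p.2 i) ''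
        (stdSimplex R (Fin k) ×ˢ univ.pi fun _ ↦ s) := by
  refine Subset.antisymm (fun x hx ↦ ?_) (iUnion_subset fun k ↦ ?_)
  · obtain ⟨ι, _, z, w, hzs, hz, hw, hw1, rfl⟩ := eq_pos_convex_span_of_mem_convexHull hx
    have hcard : Fintype.card ι < Module.finrank R E + 2 := by
      have hspan := hz.card_le_finrank_succ
      have hle := Submodule.finrank_le (vectorSpan R (range z))
      exact Nat.lt_succ_of_le (hspan.trans (Nat.succ_le_succ hle))
    let e := (Fintype.equivFin ι).symm
    refine mem_iUnion.2 ⟨⟨Fintype.card ι, hcard⟩, (w ∘ e, z ∘ e), ⟨⟨fun i ↦ (hw _).le, ?_⟩,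
      fun i _ ↦ hzs (mem_range_self _)⟩, e.sum_comp fun i ↦ w i • z i⟩
    exact (e.sum_comp w).trans hw1
  · rintro _ ⟨⟨w, z⟩, ⟨⟨hw, hw1⟩, hz⟩, rfl⟩
    exact (convex_convexHull R s).sum_mem (fun i _ ↦ hw i) hw1
      fun i _ ↦ subset_convexHull R s (hz i (mem_univ i))

theorem isCompact_convexHull {E : Type*} [AddCommGroup E] [Module ℝ E] [TopologicalSpace E]
    [ContinuousAdd E] [ContinuousSMul ℝ E] [FiniteDimensional ℝ E] {K : Set E} (hK : IsCompact K) :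
    IsCompact (convexHull ℝ K) := by
  rw [convexHull_eq_iUnion_image_stdSimplex_prod]
  exact isCompact_iUnion fun k ↦
    ((isCompact_stdSimplex ℝ (Fin k)).prod (isCompact_univ_pi fun _ ↦ hK)).image (by fun_prop)

theorem exists_strongDual_pos_of_zero_notMem_convexHull {E : Type*} [NormedAddCommGroup E]
    [NormedSpace ℝ E] [FiniteDimensional ℝ E] {K : Set E} (hK : IsCompact K)
    (h0 : (0 : E) ∉ convexHull ℝ K) : ∃ f : StrongDual ℝ E, ∀ y ∈ K, 0 < f y := by
  obtain ⟨f, u, hu, hf⟩ :=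
    geometric_hahn_banach_point_closed (convex_convexHull ℝ K) (isCompact_convexHull hK).isClosed h0
  rw [map_zero] at hu
  exact ⟨f, fun y hy ↦ hu.trans (hf y (subset_convexHull ℝ K hy))⟩

theorem isOpen_setOf_forall_mem_lt {X Y R : Type*} [TopologicalSpace X] [TopologicalSpace Y]
    [TopologicalSpace R] [LinearOrder R] [OrderClosedTopology R] {K : Set Y} (hK : IsCompact K)
    {f g : X → Y → R} (hf : Continuous f.uncurry) (hg : Continuous g.uncurry) :
    IsOpen {x | ∀ y ∈ K, f x y < g x y} :=
  isOpen_iff_eventually.2 fun _ hx ↦ hK.eventually_forall_of_forall_eventually fun y hy ↦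
    (isOpen_lt hf hg).eventually_mem (hx y hy)

theorem dense_setOf_forall_ne {ι : Type*} {X : ι → Type*} [∀ i, TopologicalSpace (X i)]
    (a : ∀ i, X i) [∀ i, (𝓝[≠] a i).NeBot] : Dense {x : ∀ i, X i | ∀ i, x i ≠ a i} := by
  have h : Dense (univ.pi fun i ↦ ({a i}ᶜ : Set (X i))) :=
    dense_pi univ fun i _ ↦ dense_compl_singleton (a i)
  simpa only [Set.pi, mem_univ, true_imp_iff, mem_compl_singleton_iff] using h

theorem exists_dotProduct_pos_of_zero_notMem_convexHull {ι : Type*} [Fintype ι] {K : Set (ι → ℝ)}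
    (hK : IsCompact K) (h0 : 0 ∉ convexHull ℝ K) :
    ∃ b : ι → ℝ, (∀ i, b i ≠ 0) ∧ ∀ y ∈ K, 0 < b ⬝ᵥ y := by
  classical
  have hopen : IsOpen {b : ι → ℝ | ∀ y ∈ K, 0 < b ⬝ᵥ y} :=
    isOpen_setOf_forall_mem_lt hK continuous_const (continuous_fst.dotProduct continuous_snd)
  have hnonempty : {b : ι → ℝ | ∀ y ∈ K, 0 < b ⬝ᵥ y}.Nonempty := by
    obtain ⟨f, hf⟩ := exists_strongDual_pos_of_zero_notMem_convexHull hK h0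
    obtain ⟨b, hb⟩ := (dotProductEquiv ℝ ι).surjective f.toLinearMap
    exact ⟨b, fun y hy ↦ (hf y hy).trans_eq (DFunLike.congr_fun hb y).symm⟩
  obtain ⟨b, hb, hb0⟩ := (dense_setOf_forall_ne (0 : ι → ℝ)).inter_open_nonempty _ hopen hnonempty
  exact ⟨b, hb0, hb⟩

theorem forall_pos_of_forall_mem_sphere_pos {V : Type*} [NormedAddCommGroup V] [NormedSpace ℝ V]
    {C : ConvexCone ℝ V} {f : V →ₗ[ℝ] ℝ} (hf : ∀ x ∈ (C : Set V) ∩ Metric.sphere 0 1, 0 < f x) :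
    ∀ x ∈ C, x ≠ 0 → 0 < f x := by
  intro x hx hx0
  have hnorm : 0 < ‖x‖⁻¹ := inv_pos.2 (norm_pos_iff.2 hx0)
  have hunit : ‖x‖⁻¹ • x ∈ Metric.sphere (0 : V) 1 :=
    mem_sphere_zero_iff_norm.2 (norm_smul_inv_norm (𝕜 := ℝ) hx0)
  have hpos := hf _ ⟨C.smul_mem hnorm hx, hunit⟩
  rw [map_smul, smul_eq_mul] at hpos
  exact pos_of_mul_pos_right hpos hnorm.le

theorem exists_positive_combination_general {V ι : Type*} [NormedAddCommGroup V] [NormedSpace ℝ V]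
    [Fintype ι] {C : ConvexCone ℝ V} (hC : C.Salient)
    (hcompact : IsCompact ((C : Set V) ∩ Metric.sphere 0 1)) (α : ι → StrongDual ℝ V)
    (hcommon : ∀ x ∈ C, x ≠ 0 → ∃ i, α i x ≠ 0) :
    ∃ b : ι → ℝ, (∀ i, b i ≠ 0) ∧ ∀ x ∈ C, x ≠ 0 → 0 < ∑ i, b i * α i x := by
  set K := (C : Set V) ∩ Metric.sphere 0 1
  let φ : V →L[ℝ] ι → ℝ := ContinuousLinearMap.pi α
  have hKC : K ⊆ (C : Set V) \ {0} := fun x hx ↦ ⟨hx.1, ne_zero_of_mem_unit_sphere ⟨x, hx.2⟩⟩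
  have hhull : convexHull ℝ K ⊆ (C : Set V) \ {0} :=
    convexHull_min hKC (convex_diff_zero_of_salient hC)
  have h0 : 0 ∉ convexHull ℝ (φ '' K) := by
    intro hmem
    obtain ⟨x, hx, hφx⟩ := (φ.toLinearMap.image_convexHull K).ge hmem
    obtain ⟨i, hi⟩ := hcommon x (hhull hx).1 (hhull hx).2
    exact hi (congrFun hφx i)
  obtain ⟨b, hb0, hb⟩ :=
    exists_dotProduct_pos_of_zero_notMem_convexHull (hcompact.image φ.continuous) h0
  refine ⟨b, hb0, ?_⟩
  exact forall_pos_of_forall_mem_sphere_pos (f := dotProductBilin ℝ ℝ b ∘ₗ φ.toLinearMap)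
    fun x hx ↦ hb (φ x) (mem_image_of_mem φ hx)

/-- If `α` and `β` are linear functionals with no common zero on `C \ {0}`, where `C`
is a nontrivial closed salient convex cone, then there are nonzero reals `b`, `c`
with `b•α + c•β` strictly positive on `C \ {0}`. -/
theorem exists_positive_combination
    {V : Type*} [NormedAddCommGroup V] [NormedSpace ℝ V] [FiniteDimensional ℝ V]
    (C : Set V)
    (hCadd : ∀ x ∈ C, ∀ y ∈ C, x + y ∈ C)
    (hCsmul : ∀ (t : ℝ), 0 ≤ t → ∀ x ∈ C, t • x ∈ C)
    (hCclosed : IsClosed C)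
    (hCsalient : ∀ x ∈ C, -x ∈ C → x = 0)
    (h0 : (0 : V) ∈ C) (hne : C ≠ {0})
    (α β : V →ₗ[ℝ] ℝ)
    (hcommon : ∀ x ∈ C \ {0}, α x ≠ 0 ∨ β x ≠ 0) :
    ∃ b c : ℝ, b ≠ 0 ∧ c ≠ 0 ∧ ∀ x ∈ C \ {0}, 0 < b * α x + c * β x := by
  have : ProperSpace V := FiniteDimensional.proper ℝ V
  obtain ⟨b, hb0, hb⟩ := exists_positive_combination_general
    (C := ⟨C, fun t ht x hx ↦ hCsmul t ht.le x hx, fun x hx y hy ↦ hCadd x hx y hy⟩)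
    (fun x hx hx0 hnx ↦ hx0 (hCsalient x hx hnx)) ((isCompact_sphere 0 1).inter_left hCclosed)
    ![α.toContinuousLinearMap, β.toContinuousLinearMap]
    (fun x hx hx0 ↦ Fin.exists_fin_two.2 (hcommon x ⟨hx, hx0⟩))
  exact ⟨b 0, b 1, hb0 0, hb0 1, fun x hx ↦ (hb x hx.1 hx.2).trans_eq (Fin.sum_univ_two _)⟩
end
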